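/- For every additive valuation v over a finite set M of indivisible goods, every subset K ⊊ M, and every entitlement b with 0 < b ≤ 1/(|K|+1), it holds that TPS(b, v, M) ≤ TPS(b/(1 − |K|·b), v, M \ K). -/

import Mathlib

open Finset

/-- The truncated proportional share of an additive valuation with item values `w`:
the largest `z ≥ 0` with `b * ∑_{j ∈ M} min (w j) z = z`. -/
noncomputable def TPS {ι : Type*} (b : ℝ) (w : ι → ℝ) (M : Finset ι) : ℝ :=
  sSup {z : ℝ | 0 ≤ z ∧ b * ∑ j ∈ M, min (w j) z = z}

/-!
Let `k = #K`. At a solution `z` of `b * ∑ j ∈ M, min (w j) z = z` the items of `K` contribute at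
most `k * z` to the sum, so `(1 - k * b) * z ≤ b * ∑ j ∈ M \ K, min (w j) z`: the truncated
proportional value of the reduced instance is at least its truncation point `z`. As a function of
the truncation point that value is continuous and bounded, so it meets the diagonal at some `y ≥ z`.
-/

theorem sum_le_sum_sdiff_add_card_nsmul {ι R : Type*} [DecidableEq ι] [AddCommMonoid R]
    [PartialOrder R] [IsOrderedAddMonoid R] {M K : Finset ι} {f : ι → R} {z : R} (hz : 0 ≤ z)
    (hf : ∀ j ∈ M ∩ K, f j ≤ z) :
    ∑ j ∈ M, f j ≤ ∑ j ∈ M \ K, f j + #K • z :=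
  calc ∑ j ∈ M, f j = ∑ j ∈ M \ K, f j + ∑ j ∈ M ∩ K, f j := by
        rw [add_comm, sum_inter_add_sum_sdiff]
    _ ≤ ∑ j ∈ M \ K, f j + #(M ∩ K) • z := by
        gcongr
        exact sum_le_card_nsmul _ _ _ hf
    _ ≤ ∑ j ∈ M \ K, f j + #K • z := by
        gcongr
        exact inter_subset_right

section TPS

variable {ι : Type*} {b z : ℝ} {w : ι → ℝ} {M : Finset ι}

theorem mul_sum_min_le_mul_sum (hb : 0 ≤ b) (z : ℝ) :
    b * ∑ j ∈ M, min (w j) z ≤ b * ∑ j ∈ M, w j := by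
  gcongr
  exact min_le_left _ _

theorem tps_nonneg : 0 ≤ TPS b w M :=
  Real.sSup_nonneg fun _ hz => hz.1

theorem le_tps_of_eq (hb : 0 ≤ b) (hz : 0 ≤ z) (h : b * ∑ j ∈ M, min (w j) z = z) :
    z ≤ TPS b w M := by
  refine le_csSup ⟨b * ∑ j ∈ M, w j, ?_⟩ ⟨hz, h⟩
  rintro y ⟨-, hy⟩
  exact hy.symm.trans_le (mul_sum_min_le_mul_sum hb y)

theorem le_tps_of_le (hb : 0 ≤ b) (hz : 0 ≤ z) (h : z ≤ b * ∑ j ∈ M, min (w j) z) :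
    z ≤ TPS b w M := by
  have hcont : Continuous fun y => b * ∑ j ∈ M, min (w j) y := by fun_prop
  obtain ⟨y, ⟨hzy, -⟩, hy⟩ := exists_mem_Icc_isFixedPt hcont.continuousOn
    (h.trans (mul_sum_min_le_mul_sum hb z)) h (mul_sum_min_le_mul_sum hb _)
  exact hzy.trans (le_tps_of_eq hb (hz.trans hzy) hy)

theorem le_div_mul_sum_sdiff_min [DecidableEq ι] {K : Finset ι} (hb : 0 ≤ b)
    (hKb : (#K : ℝ) * b < 1) (hz : 0 ≤ z) (h : z ≤ b * ∑ j ∈ M, min (w j) z) :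
    z ≤ b / (1 - (#K : ℝ) * b) * ∑ j ∈ M \ K, min (w j) z := by
  have hsum : ∑ j ∈ M, min (w j) z ≤ ∑ j ∈ M \ K, min (w j) z + #K * z := by
    simpa only [nsmul_eq_mul] using
      sum_le_sum_sdiff_add_card_nsmul hz fun j _ => min_le_right (w j) z
  rw [div_mul_eq_mul_div, le_div_iff₀ (sub_pos.mpr hKb)]
  linarith [mul_le_mul_of_nonneg_left hsum hb]

end TPS

theorem tps_remove_items_general {ι : Type*} [DecidableEq ι] (M K : Finset ι) (w : ι → ℝ)
    (b : ℝ) (hb : 0 ≤ b) (hKb : (#K : ℝ) * b < 1) :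
    TPS b w M ≤ TPS (b / (1 - (#K : ℝ) * b)) w (M \ K) := by
  have hc : 0 ≤ b / (1 - (#K : ℝ) * b) := div_nonneg hb (sub_pos.mpr hKb).le
  -- When some `w j < 0` there may be no solution `z ≥ 0`, and then `TPS` is `sSup ∅ = 0`.
  refine Real.sSup_le (fun z ⟨hz, hfix⟩ => ?_) tps_nonneg
  exact le_tps_of_le hc hz (le_div_mul_sum_sdiff_min hb hKb hz hfix.ge)

/-- Removing a proper subset `K` of items and rescaling the entitlement `b ≤ 1/(|K|+1)`
to `b/(1-|K|·b)` can only increase the truncated proportional share. -/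
theorem tps_remove_items {ι : Type*} [DecidableEq ι] (M K : Finset ι) (hK : K ⊂ M)
    (w : ι → ℝ) (hw : ∀ j ∈ M, 0 ≤ w j)
    (b : ℝ) (hb0 : 0 < b) (hb1 : b ≤ 1 / ((K.card : ℝ) + 1)) :
    TPS b w M ≤ TPS (b / (1 - (K.card : ℝ) * b)) w (M \ K) := by
  have hKb : (#K : ℝ) * b < 1 := by
    rw [le_div_iff₀ (by positivity)] at hb1
    linarith
  exact tps_remove_items_general M K w b hb0.le hKb
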